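/- arXiv:math/0412429 — 5 statements merged into one kernel-verified Lean document; each statement's English description precedes it below -/
import Mathlib

section
/- Let γ ∈ (0,1), w ≥ 0, w₊ ≥ 0, and let η and η₊ be independent integrable real random variables with E[η] = E[η₊] = 0. Set w' = (1-γ)w + γw₊ + ηw and w₊' = (1-γ)w₊ + γw + η₊w₊. Then the expected total wealth gain when only trades leaving both wealths nonnegative are performed is nonnegative: E[(w' + w₊' - w - w₊) · Ψ(w' ≥ 0)Ψ(w₊' ≥ 0)] ≥ 0, where Ψ(A) denotes the indicator of the event A. (Thus the no-debt rule makes the total wealth increasing in mean.) -/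
open MeasureTheory

/-- A centred variable truncated from below at a nonpositive level has nonnegative mean. -/
lemma truncated_mean_nonneg {Ω : Type*} [MeasurableSpace Ω] (P : Measure Ω)
    (c w : ℝ) (hc : 0 ≤ c) (η : Ω → ℝ) (hm : Measurable η) (hη : Integrable η P)
    (hE : ∫ ω, η ω ∂P = 0) :
    Integrable (fun ω => η ω * w * (if 0 ≤ c + η ω * w then (1:ℝ) else 0)) P ∧
    0 ≤ ∫ ω, η ω * w * (if 0 ≤ c + η ω * w then (1:ℝ) else 0) ∂P := by
  have hs : MeasurableSet {ω | 0 ≤ c + η ω * w} :=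
    measurableSet_le measurable_const (by fun_prop)
  have hi : Integrable (fun ω => η ω * w * (if 0 ≤ c + η ω * w then (1:ℝ) else 0)) P := by
    refine (hη.mul_const w).mono ?_ ?_
    · exact ((hm.mul_const w).mul
        (Measurable.ite hs measurable_const measurable_const)).aestronglyMeasurable
    · refine Filter.Eventually.of_forall fun ω => ?_
      split_ifs <;> simp
      positivity
  refine ⟨hi, ?_⟩
  have h0 : ∫ ω, η ω * w ∂P = 0 := by rw [integral_mul_const, hE, zero_mul]
  refine h0.symm.le.trans (integral_mono (hη.mul_const w) hi fun ω => ?_)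
  dsimp only
  split_ifs with h
  · simp
  · push Not at h
    linarith

/-- The no-debt rule makes the total wealth increasing in mean: the expected total
wealth gain restricted to admissible trades is nonnegative,
`E[(w' + w₊' - w - w₊) · Ψ(w' ≥ 0)Ψ(w₊' ≥ 0)] ≥ 0`. -/
theorem expected_admissible_wealth_gain_nonneg {Ω : Type*} [MeasurableSpace Ω]
    (P : Measure Ω) [IsProbabilityMeasure P]
    (γ w ws : ℝ) (hγ : γ ∈ Set.Ioo (0:ℝ) 1) (hw : 0 ≤ w) (hws : 0 ≤ ws)
    (η ηs : Ω → ℝ) (hmη : Measurable η) (hmηs : Measurable ηs)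
    (hind : ProbabilityTheory.IndepFun η ηs P)
    (hη : Integrable η P) (hηs : Integrable ηs P)
    (hEη : ∫ ω, η ω ∂P = 0) (hEηs : ∫ ω, ηs ω ∂P = 0) :
    0 ≤ ∫ ω, ((((1 - γ) * w + γ * ws + η ω * w) + ((1 - γ) * ws + γ * w + ηs ω * ws)
          - w - ws) *
        ((if 0 ≤ (1 - γ) * w + γ * ws + η ω * w then (1:ℝ) else 0) *
         (if 0 ≤ (1 - γ) * ws + γ * w + ηs ω * ws then (1:ℝ) else 0))) ∂P := by
  obtain ⟨hγ0, hγ1⟩ := hγ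
  have h1 : 0 ≤ 1 - γ := by linarith
  obtain ⟨hi1, hp1⟩ := truncated_mean_nonneg P ((1 - γ) * w + γ * ws) w (by positivity) η hmη hη hEη
  obtain ⟨hi2, hp2⟩ := truncated_mean_nonneg P ((1 - γ) * ws + γ * w) ws (by positivity)
    ηs hmηs hηs hEηs
  have mI : ∀ c v : ℝ, Measurable (fun x : ℝ => if 0 ≤ c + x * v then (1:ℝ) else 0) := fun c v =>
    Measurable.ite (measurableSet_le measurable_const (by fun_prop)) measurable_const
      measurable_const
  have mJ : ∀ c v : ℝ, Measurable (fun x : ℝ => x * v * (if 0 ≤ c + x * v then (1:ℝ) else 0)) :=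
    fun c v => (measurable_id.mul_const v).mul (mI c v)
  have iI : ∀ (c v : ℝ) (X : Ω → ℝ), Measurable X →
      Integrable (fun ω => if 0 ≤ c + X ω * v then (1:ℝ) else 0) P := fun c v X hX => by
    refine (integrable_const (1:ℝ)).mono ((mI c v).comp hX).aestronglyMeasurable
      (Filter.Eventually.of_forall fun ω => ?_)
    split_ifs <;> simp
  have nI : ∀ (c v : ℝ) (X : Ω → ℝ),
      0 ≤ ∫ ω, (if 0 ≤ c + X ω * v then (1:ℝ) else 0) ∂P := fun c v X =>
    integral_nonneg fun ω => by dsimp only; split_ifs <;> simp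
  have ind1 := hind.comp (mJ ((1 - γ) * w + γ * ws) w) (mI ((1 - γ) * ws + γ * w) ws)
  have ind2 := hind.comp (mI ((1 - γ) * w + γ * ws) w) (mJ ((1 - γ) * ws + γ * w) ws)
  have I1 := ind1.integrable_mul hi1 (iI _ _ _ hmηs)
  have I2 := ind2.integrable_mul (iI _ _ _ hmη) hi2
  have e1 := ind1.integral_mul_eq_mul_integral hi1.aestronglyMeasurable
    (iI _ _ _ hmηs).aestronglyMeasurable
  have e2 := ind2.integral_mul_eq_mul_integral (iI _ _ _ hmη).aestronglyMeasurable
    hi2.aestronglyMeasurable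
  have key := integral_add I1 I2
  rw [e1, e2] at key
  have fin := add_nonneg (mul_nonneg hp1 (nI ((1 - γ) * ws + γ * w) ws ηs))
    (mul_nonneg (nI ((1 - γ) * w + γ * ws) w η) hp2)
  refine (fin.trans_eq key.symm).trans_eq (integral_congr_ae (Filter.Eventually.of_forall fun ω => ?_))
  simp only [Pi.mul_apply, Function.comp_apply]
  ring
end

section
/- Let γ ∈ (0,1), α > 0, and let Y be a real random variable with E[Y] = 0, E[Y²] = 1 and E[|Y|^{2+α}] < ∞. Let σ > 0 and let η = σY₁ and η₊ = σY₂ where Y₁, Y₂ are independent copies of Y. For w ≥ 0, w₊ ≥ 0 set w' = (1-γ)w + γw₊ + ηw and w₊' = (1-γ)w₊ + γw + η₊w₊. Then the expected total wealth gain of an admissible trade satisfies the upper bound E[(w' + w₊' - w - w₊) · Ψ(w' ≥ 0)Ψ(w₊' ≥ 0)] ≤ σ^{2+α} E[|Y|^{2+α}] · (2-γ)/(1-γ)^{2+α} · (w + w₊), where Ψ(A) denotes the indicator of the event A. -/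
open MeasureTheory

lemma ewg_pointwise (γ α σ w b x J : ℝ) (h0 : 0 < γ) (h1 : γ < 1) (hα : 0 < α) (hσ : 0 < σ)
    (hw : 0 ≤ w) (hb : 0 ≤ b) (hJ0 : 0 ≤ J) (hJ1 : J ≤ 1) :
    σ * x * w * ((if 0 ≤ (1 - γ) * w + γ * b + σ * x * w then (1:ℝ) else 0) * J)
      ≤ σ * w * (x * J) + w * (σ ^ (2 + α) * (2 - γ) / (1 - γ) ^ (2 + α)) * |x| ^ (2 + α) := by
  have hg : 0 < 1 - γ := by linarith
  have hC : w * (σ ^ (2 + α) * (2 - γ) / (1 - γ) ^ (2 + α)) * |x| ^ (2 + α)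
      = w * ((2 - γ) * (σ * |x| / (1 - γ)) ^ (2 + α)) := by
    rw [Real.div_rpow (by positivity) hg.le, Real.mul_rpow hσ.le (abs_nonneg x)]
    ring
  rw [hC]
  have ht0 : 0 ≤ σ * |x| / (1 - γ) := by positivity
  have hp : 0 ≤ (σ * |x| / (1 - γ)) ^ (2 + α) := Real.rpow_nonneg ht0 _
  have hpos : 0 ≤ w * ((2 - γ) * (σ * |x| / (1 - γ)) ^ (2 + α)) :=
    mul_nonneg hw (mul_nonneg (by linarith) hp)
  split_ifs with h
  · nlinarith
  · rcases hw.eq_or_lt with rfl | hw'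
    · simp
    · push Not at h
      have hx : σ * x < -(1 - γ) := by
        by_contra hc
        push Not at hc
        nlinarith [mul_le_mul_of_nonneg_right hc hw, mul_nonneg h0.le hb]
      have hxn : x < 0 := by
        by_contra hc
        push Not at hc
        nlinarith [mul_nonneg hσ.le hc]
      have hax : |x| = -x := abs_of_neg hxn
      have ht1 : 1 ≤ σ * |x| / (1 - γ) := by
        rw [le_div_iff₀ hg, hax]; linarith
      have hle : σ * |x| / (1 - γ) ≤ (σ * |x| / (1 - γ)) ^ (2 + α) :=
        Real.self_le_rpow_of_one_le ht1 (by linarith)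
      have e : σ * |x| = (1 - γ) * (σ * |x| / (1 - γ)) := by field_simp
      have h2 : σ * |x| ≤ (2 - γ) * (σ * |x| / (1 - γ)) ^ (2 + α) := by
        nlinarith
      have h3 : σ * |x| * J ≤ σ * |x| := mul_le_of_le_one_right (by positivity) hJ1
      have h4 := mul_le_mul_of_nonneg_left (h3.trans h2) hw
      rw [hax] at h4
      rw [hax]
      nlinarith

lemma ewg_zero {Ω : Type*} [MeasurableSpace Ω] (P : Measure Ω)
    (X Z : Ω → ℝ) (f : ℝ → ℝ) (hX : Measurable X) (hZ : Measurable Z) (hf : Measurable f)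
    (hind : ProbabilityTheory.IndepFun X Z P) (hE : ∫ ω, X ω ∂P = 0) :
    ∫ ω, X ω * f (Z ω) ∂P = 0 := by
  have h : ProbabilityTheory.IndepFun X (fun ω => f (Z ω)) P :=
    hind.comp measurable_id hf
  rw [h.integral_fun_mul_eq_mul_integral hX.aestronglyMeasurable
    (hf.comp hZ).aestronglyMeasurable, hE, zero_mul]

lemma ewg_int {Ω : Type*} [MeasurableSpace Ω] (P : Measure Ω)
    (X J : Ω → ℝ) (hX : Integrable X P) (hJ : Measurable J)
    (h0 : ∀ ω, 0 ≤ J ω) (h1 : ∀ ω, J ω ≤ 1) :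
    Integrable (fun ω => X ω * J ω) P := by
  refine hX.mul_bdd (c := 1) hJ.aestronglyMeasurable (Filter.Eventually.of_forall fun ω => ?_)
  rw [Real.norm_eq_abs, abs_of_nonneg (h0 ω)]
  exact h1 ω

/-- Upper bound for the expected total wealth gain of an admissible trade:
`E[(w' + w₊' - w - w₊) Ψ(w' ≥ 0)Ψ(w₊' ≥ 0)]
  ≤ σ^{2+α} E[|Y|^{2+α}] (2-γ)/(1-γ)^{2+α} (w + w₊)`,
where `η = σY₁`, `η₊ = σY₂` and `Y₁, Y₂` are independent copies of a centered
unit-variance random variable `Y` with finite `(2+α)`-moment. -/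
theorem expected_wealth_gain_upper_bound {Ω : Type*} [MeasurableSpace Ω]
    (P : Measure Ω) [IsProbabilityMeasure P]
    (γ α σ w ws : ℝ) (hγ : γ ∈ Set.Ioo (0:ℝ) 1) (hα : 0 < α) (hσ : 0 < σ)
    (hw : 0 ≤ w) (hws : 0 ≤ ws)
    (Y₁ Y₂ : Ω → ℝ) (hm1 : Measurable Y₁) (hm2 : Measurable Y₂)
    (hind : ProbabilityTheory.IndepFun Y₁ Y₂ P)
    (hid : Measure.map Y₁ P = Measure.map Y₂ P)
    (hE : ∫ ω, Y₁ ω ∂P = 0) (hV : ∫ ω, Y₁ ω ^ 2 ∂P = 1)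
    (hint1 : Integrable Y₁ P) (hint2 : Integrable (fun ω => Y₁ ω ^ 2) P)
    (hmom : Integrable (fun ω => |Y₁ ω| ^ (2 + α)) P) :
    ∫ ω, ((((1 - γ) * w + γ * ws + σ * Y₁ ω * w)
            + ((1 - γ) * ws + γ * w + σ * Y₂ ω * ws) - w - ws) *
        ((if 0 ≤ (1 - γ) * w + γ * ws + σ * Y₁ ω * w then (1:ℝ) else 0) *
         (if 0 ≤ (1 - γ) * ws + γ * w + σ * Y₂ ω * ws then (1:ℝ) else 0))) ∂P
      ≤ σ ^ (2 + α) * (∫ ω, |Y₁ ω| ^ (2 + α) ∂P) * (2 - γ) / (1 - γ) ^ (2 + α)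
          * (w + ws) := by
  obtain ⟨h0, h1⟩ := hγ
  have hident : ProbabilityTheory.IdentDistrib Y₁ Y₂ P P :=
    ⟨hm1.aemeasurable, hm2.aemeasurable, hid⟩
  have hint1' : Integrable Y₂ P := hident.integrable_iff.1 hint1
  have hE' : ∫ ω, Y₂ ω ∂P = 0 := hident.integral_eq ▸ hE
  have hu : Measurable (fun x : ℝ => |x| ^ (2 + α)) := by fun_prop
  have hident2 : ProbabilityTheory.IdentDistrib (fun ω => |Y₁ ω| ^ (2 + α))
      (fun ω => |Y₂ ω| ^ (2 + α)) P P := hident.comp hu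
  have hmom' : Integrable (fun ω => |Y₂ ω| ^ (2 + α)) P := hident2.integrable_iff.1 hmom
  have hM : ∫ ω, |Y₁ ω| ^ (2 + α) ∂P = ∫ ω, |Y₂ ω| ^ (2 + α) ∂P := hident2.integral_eq
  set f : ℝ → ℝ := fun y => if 0 ≤ (1 - γ) * w + γ * ws + σ * y * w then (1:ℝ) else 0 with hf
  set g : ℝ → ℝ := fun y => if 0 ≤ (1 - γ) * ws + γ * w + σ * y * ws then (1:ℝ) else 0 with hg
  have hfm : Measurable f :=
    Measurable.ite (measurableSet_le measurable_const (by fun_prop)) measurable_const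
      measurable_const
  have hgm : Measurable g :=
    Measurable.ite (measurableSet_le measurable_const (by fun_prop)) measurable_const
      measurable_const
  have hf0 : ∀ y, 0 ≤ f y := fun y => by simp only [hf]; split_ifs <;> norm_num
  have hf1 : ∀ y, f y ≤ 1 := fun y => by simp only [hf]; split_ifs <;> norm_num
  have hg0 : ∀ y, 0 ≤ g y := fun y => by simp only [hg]; split_ifs <;> norm_num
  have hg1 : ∀ y, g y ≤ 1 := fun y => by simp only [hg]; split_ifs <;> norm_num
  set C : ℝ := σ ^ (2 + α) * (2 - γ) / (1 - γ) ^ (2 + α) with hC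
  have i1 : Integrable (fun ω => σ * w * (Y₁ ω * g (Y₂ ω))) P :=
    (ewg_int P Y₁ (fun ω => g (Y₂ ω)) hint1 (hgm.comp hm2) (fun _ => hg0 _)
      (fun _ => hg1 _)).const_mul _
  have i2 : Integrable (fun ω => w * C * |Y₁ ω| ^ (2 + α)) P := hmom.const_mul _
  have i3 : Integrable (fun ω => σ * ws * (Y₂ ω * f (Y₁ ω))) P :=
    (ewg_int P Y₂ (fun ω => f (Y₁ ω)) hint1' (hfm.comp hm1) (fun _ => hf0 _)
      (fun _ => hf1 _)).const_mul _
  have i4 : Integrable (fun ω => ws * C * |Y₂ ω| ^ (2 + α)) P := hmom'.const_mul _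
  have z1 := ewg_zero P Y₁ Y₂ g hm1 hm2 hgm hind hE
  have z2 := ewg_zero P Y₂ Y₁ f hm2 hm1 hfm hind.symm hE'
  have key : ∫ ω, ((((1 - γ) * w + γ * ws + σ * Y₁ ω * w)
            + ((1 - γ) * ws + γ * w + σ * Y₂ ω * ws) - w - ws) * (f (Y₁ ω) * g (Y₂ ω))) ∂P
      ≤ ∫ ω, ((σ * w * (Y₁ ω * g (Y₂ ω)) + w * C * |Y₁ ω| ^ (2 + α))
          + (σ * ws * (Y₂ ω * f (Y₁ ω)) + ws * C * |Y₂ ω| ^ (2 + α))) ∂P := by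
    refine integral_mono ?_ ((i1.add i2).add (i3.add i4)) ?_
    · refine ewg_int P _ (fun ω => f (Y₁ ω) * g (Y₂ ω)) ?_
        ((hfm.comp hm1).mul (hgm.comp hm2)) (fun _ => mul_nonneg (hf0 _) (hg0 _))
        (fun _ => mul_le_one₀ (hf1 _) (hg0 _) (hg1 _))
      have : Integrable (fun ω => σ * w * Y₁ ω + σ * ws * Y₂ ω) P :=
        (hint1.const_mul _).add (hint1'.const_mul _)
      refine this.congr (Filter.Eventually.of_forall fun ω => ?_)
      simp only
      ring
    · intro ω
      have a := ewg_pointwise γ α σ w ws (Y₁ ω) (g (Y₂ ω)) h0 h1 hα hσ hw hws (hg0 _) (hg1 _)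
      have b := ewg_pointwise γ α σ ws w (Y₂ ω) (f (Y₁ ω)) h0 h1 hα hσ hws hw (hf0 _) (hf1 _)
      change σ * Y₁ ω * w * (f (Y₁ ω) * g (Y₂ ω)) ≤ _ at a
      change σ * Y₂ ω * ws * (g (Y₂ ω) * f (Y₁ ω)) ≤ _ at b
      refine le_trans (le_of_eq ?_) (add_le_add a b)
      ring
  refine key.trans (le_of_eq ?_)
  have e1 := integral_add (i1.add i2) (i3.add i4)
  have e2 := integral_add i1 i2
  have e3 := integral_add i3 i4
  simp only [Pi.add_apply] at e1
  rw [e1, e2, e3]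
  simp only [integral_const_mul]
  rw [z1, z2, ← hM, hC]
  ring
end

section
/- Let δ ∈ (0,1], λ > 0, w ≥ 0, w₊ ≥ 0, and let Y be a real random variable with E[Y] = 0, E[Y²] = 1 and E[|Y|^{2+δ}] < ∞. Let φ : ℝ → ℝ be twice differentiable with φ'' Hölder continuous of order δ. For γ ∈ (0,1) define the random post-trade wealth w'_γ = w + γ(w₊ - w) + √(λγ) Y w. Then lim_{γ → 0⁺} (1/γ) E[ φ(w'_γ) - φ(w) ] = (w₊ - w) φ'(w) + (λ/2) w² φ''(w). (This is the pointwise continuous trading limit producing the drift and diffusion terms of the Fokker-Planck equation ∂g/∂τ = (λ/2) ∂²(w²g)/∂w² + ∂((w-m)g)/∂w.) -/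
open MeasureTheory

lemma taylor_bound (δ : ℝ) (hδ : 0 < δ) (w : ℝ)
    (φ φ' φ'' : ℝ → ℝ)
    (hd1 : ∀ x, HasDerivAt φ (φ' x) x) (hd2 : ∀ x, HasDerivAt φ' (φ'' x) x)
    (C : ℝ) (hC0 : 0 ≤ C) (hC : ∀ a b, |φ'' a - φ'' b| ≤ C * |a - b| ^ δ) (h : ℝ) :
    |φ (w + h) - φ w - φ' w * h - φ'' w / 2 * h ^ 2| ≤ C * |h| ^ (2 + δ) := by
  have key1 : ∀ t, |φ' (w + t) - φ' w - φ'' w * t| ≤ C * |t| ^ δ * |t| := by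
    intro t
    have := (convex_Icc (-|t|) |t|).norm_image_sub_le_of_norm_hasDerivWithin_le
      (f := fun x => φ' (w + x) - φ'' w * x) (f' := fun x => φ'' (w + x) - φ'' w)
      (C := C * |t| ^ δ) (x := 0) (y := t) (fun x _ => by
        have h1 : HasDerivAt (fun x => φ' (w + x)) (φ'' (w + x)) x :=
          HasDerivAt.comp_const_add w x (hd2 (w + x))
        have h2 : HasDerivAt (fun x => φ'' w * x) (φ'' w) x := by
          simpa using (hasDerivAt_id x).const_mul (φ'' w)
        exact (h1.sub h2).hasDerivWithinAt)
      (fun x hx => by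
        have hx' : |x| ≤ |t| := abs_le.2 hx
        rw [Real.norm_eq_abs]
        refine (hC _ _).trans ?_
        rw [add_sub_cancel_left]
        gcongr)
      ⟨by simp, by simp⟩ (abs_le.1 le_rfl)
    simp only [Real.norm_eq_abs] at this
    convert this using 2 <;> simp
    ring
  have := (convex_Icc (-|h|) |h|).norm_image_sub_le_of_norm_hasDerivWithin_le
      (f := fun x => φ (w + x) - φ' w * x - φ'' w / 2 * x ^ 2)
      (f' := fun x => φ' (w + x) - φ' w - φ'' w * x)
      (C := C * |h| ^ δ * |h|) (x := 0) (y := h) (fun x _ => by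
        have h1 : HasDerivAt (fun x => φ (w + x)) (φ' (w + x)) x :=
          HasDerivAt.comp_const_add w x (hd1 (w + x))
        have h2 : HasDerivAt (fun x => φ' w * x) (φ' w) x := by
          simpa using (hasDerivAt_id x).const_mul (φ' w)
        have h3 : HasDerivAt (fun x => φ'' w / 2 * x ^ 2) (φ'' w * x) x := by
          refine ((hasDerivAt_pow 2 x).const_mul (φ'' w / 2)).congr_deriv ?_
          norm_num
          ring
        exact ((h1.sub h2).sub h3).hasDerivWithinAt)
      (fun x hx => by
        have hx' : |x| ≤ |h| := abs_le.2 hx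
        rw [Real.norm_eq_abs]
        refine (key1 x).trans ?_
        gcongr)
      ⟨by simp, by simp⟩ (abs_le.1 le_rfl)
  simp only [Real.norm_eq_abs] at this
  have e : C * |h| ^ (2 + δ) = C * |h| ^ δ * |h| * |h| := by
    rw [Real.rpow_add_of_nonneg (abs_nonneg _) (by norm_num) hδ.le, Real.rpow_two]
    ring
  rw [e]
  convert this using 2 <;> simp
  ring

/-- Pointwise continuous trading limit: with `w'_γ = w + γ(w₊-w) + √(λγ) Y w`,
`lim_{γ→0⁺} (1/γ) E[φ(w'_γ) - φ(w)] = (w₊-w)φ'(w) + (λ/2)w²φ''(w)`,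
producing the drift and diffusion terms of the Fokker-Planck equation. -/
theorem continuous_trading_limit {Ω : Type*} [MeasurableSpace Ω]
    (P : Measure Ω) [IsProbabilityMeasure P]
    (δ l w ws : ℝ) (hδ : δ ∈ Set.Ioc (0:ℝ) 1) (hl : 0 < l)
    (hw : 0 ≤ w) (hws : 0 ≤ ws)
    (Y : Ω → ℝ) (hmY : Measurable Y)
    (hY1 : Integrable Y P) (hY2 : Integrable (fun ω => Y ω ^ 2) P)
    (hmom : Integrable (fun ω => |Y ω| ^ (2 + δ)) P)
    (hEY : ∫ ω, Y ω ∂P = 0) (hVY : ∫ ω, Y ω ^ 2 ∂P = 1)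
    (φ φ' φ'' : ℝ → ℝ)
    (hd1 : ∀ x, HasDerivAt φ (φ' x) x) (hd2 : ∀ x, HasDerivAt φ' (φ'' x) x)
    (C : ℝ) (hC : ∀ a b, |φ'' a - φ'' b| ≤ C * |a - b| ^ δ) :
    Filter.Tendsto
      (fun γ : ℝ =>
        (1 / γ) * ∫ ω, (φ (w + γ * (ws - w) + Real.sqrt (l * γ) * Y ω * w) - φ w) ∂P)
      (nhdsWithin 0 (Set.Ioi 0))
      (nhds ((ws - w) * φ' w + (l / 2) * w ^ 2 * φ'' w)) := by
  obtain ⟨hδ0, -⟩ := hδ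
  have hC0 : 0 ≤ C := by
    have := (abs_nonneg _).trans (hC 1 0)
    simpa using this
  have hT := taylor_bound δ hδ0 w φ φ' φ'' hd1 hd2 C hC0 hC
  set a := ws - w with ha
  set M := |a| + Real.sqrt l * w with hM
  have hM0 : 0 ≤ M := by positivity
  set D := C * M ^ (2 + δ) * (1 + ∫ ω, |Y ω| ^ (2 + δ) ∂P) with hD
  have hφc : Continuous φ := continuous_iff_continuousAt.2 fun x => (hd1 x).continuousAt
  have key : ∀ γ ∈ Set.Ioc (0:ℝ) 1,
      |(1 / γ) * ∫ ω, (φ (w + γ * a + Real.sqrt (l * γ) * Y ω * w) - φ w) ∂P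
        - (a * φ' w + (l / 2) * w ^ 2 * φ'' w)| ≤ |φ'' w / 2 * a ^ 2| * γ + D * Real.sqrt γ ^ δ := by
    rintro γ ⟨hγ, hγ1⟩
    set s := Real.sqrt (l * γ) with hs
    have hs2 : s ^ 2 = l * γ := Real.sq_sqrt (by positivity)
    set h : Ω → ℝ := fun ω => γ * a + s * Y ω * w with hh
    set R : Ω → ℝ := fun ω => φ (w + h ω) - φ w - φ' w * h ω - φ'' w / 2 * h ω ^ 2 with hR
    have hhm : Measurable h := by fun_prop
    have hRm : Measurable R := by
      have := hφc.measurable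
      fun_prop
    have hg2 : Real.sqrt γ ^ 2 = γ := Real.sq_sqrt hγ.le
    have hg1 : Real.sqrt γ ≤ 1 := Real.sqrt_le_one.2 hγ1
    have hg0 : 0 < Real.sqrt γ := Real.sqrt_pos.2 hγ
    have hbound : ∀ ω, ‖R ω‖ ≤ C * (γ * Real.sqrt γ ^ δ * M ^ (2 + δ)) * (1 + |Y ω| ^ (2 + δ)) := by
      intro ω
      refine (hT (h ω)).trans ?_
      rw [mul_assoc]
      refine mul_le_mul_of_nonneg_left ?_ hC0
      have h1 : |h ω| ≤ Real.sqrt γ * M * max 1 |Y ω| := by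
        have e1 : |h ω| ≤ γ * |a| + s * |Y ω| * w := by
          refine (abs_add_le _ _).trans (le_of_eq ?_)
          rw [abs_mul, abs_mul, abs_mul, abs_of_pos hγ, abs_of_nonneg hw,
            abs_of_nonneg (Real.sqrt_nonneg _)]
        have e2 : γ ≤ Real.sqrt γ := by nlinarith
        have e3 : s = Real.sqrt l * Real.sqrt γ := Real.sqrt_mul hl.le _
        have e4 : γ * |a| ≤ Real.sqrt γ * |a| * max 1 |Y ω| := by
          calc γ * |a| ≤ Real.sqrt γ * |a| := by gcongr
            _ = Real.sqrt γ * |a| * 1 := by ring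
            _ ≤ _ := by gcongr; exact le_max_left _ _
        have e5 : s * |Y ω| * w ≤ Real.sqrt γ * (Real.sqrt l * w) * max 1 |Y ω| := by
          calc s * |Y ω| * w = Real.sqrt γ * (Real.sqrt l * w) * |Y ω| := by rw [e3]; ring
            _ ≤ _ := by gcongr; exact le_max_right _ _
        calc |h ω| ≤ _ := e1
          _ ≤ _ := add_le_add e4 e5
          _ = _ := by rw [hM]; ring
      have hmax0 : 0 ≤ max 1 |Y ω| := zero_le_one.trans (le_max_left _ _)
      have h2 : max 1 |Y ω| ^ (2 + δ) ≤ 1 + |Y ω| ^ (2 + δ) := by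
        have p0 : 0 ≤ |Y ω| ^ (2 + δ) := by positivity
        rcases max_choice 1 |Y ω| with e | e <;> rw [e]
        · rw [Real.one_rpow]; linarith
        · linarith
      calc |h ω| ^ (2 + δ) ≤ (Real.sqrt γ * M * max 1 |Y ω|) ^ (2 + δ) := by gcongr
        _ = Real.sqrt γ ^ (2 + δ) * M ^ (2 + δ) * max 1 |Y ω| ^ (2 + δ) := by
            rw [Real.mul_rpow (by positivity) hmax0, Real.mul_rpow hg0.le hM0]
        _ = γ * Real.sqrt γ ^ δ * M ^ (2 + δ) * max 1 |Y ω| ^ (2 + δ) := by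
            rw [Real.rpow_add hg0, Real.rpow_two, hg2]
        _ ≤ _ := by gcongr
    have hBi : Integrable (fun ω => C * (γ * Real.sqrt γ ^ δ * M ^ (2 + δ)) *
        (1 + |Y ω| ^ (2 + δ))) P := ((integrable_const 1).add hmom).const_mul _
    have hRi : Integrable R P :=
      hBi.mono' hRm.aestronglyMeasurable (Filter.Eventually.of_forall hbound)
    have hRint : |∫ ω, R ω ∂P| ≤ γ * (D * Real.sqrt γ ^ δ) := by
      have := norm_integral_le_of_norm_le hBi (Filter.Eventually.of_forall hbound)
      rw [integral_const_mul, integral_add (integrable_const 1) hmom] at this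
      simp only [integral_const, probReal_univ, smul_eq_mul, Real.norm_eq_abs, mul_one] at this
      refine this.trans (le_of_eq ?_)
      rw [hD]; ring
    have hsum : ∫ ω, (φ (w + γ * a + s * Y ω * w) - φ w) ∂P
        = (φ' w * γ * a + φ'' w / 2 * (γ ^ 2 * a ^ 2))
          + (φ'' w / 2 * (l * γ * w ^ 2)) + ∫ ω, R ω ∂P := by
      have e : ∀ ω, φ (w + γ * a + s * Y ω * w) - φ w
          = (((φ' w * γ * a + φ'' w / 2 * (γ ^ 2 * a ^ 2))
            + (φ' w * s * w + φ'' w * γ * a * s * w) * Y ω)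
            + (φ'' w / 2 * (l * γ * w ^ 2)) * Y ω ^ 2) + R ω := by
        intro ω
        simp only [hR, hh]
        rw [← hs2, ← add_assoc]
        ring
      simp_rw [e]
      have i1 := hY1.const_mul (φ' w * s * w + φ'' w * γ * a * s * w)
      have i2 := hY2.const_mul (φ'' w / 2 * (l * γ * w ^ 2))
      have i0 : Integrable (fun _ : Ω => φ' w * γ * a + φ'' w / 2 * (γ ^ 2 * a ^ 2)) P :=
        integrable_const _
      have i01 : Integrable (fun ω => (φ' w * γ * a + φ'' w / 2 * (γ ^ 2 * a ^ 2))
          + (φ' w * s * w + φ'' w * γ * a * s * w) * Y ω) P := i0.add i1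
      have i012 : Integrable (fun ω => ((φ' w * γ * a + φ'' w / 2 * (γ ^ 2 * a ^ 2))
          + (φ' w * s * w + φ'' w * γ * a * s * w) * Y ω)
          + (φ'' w / 2 * (l * γ * w ^ 2)) * Y ω ^ 2) P := i01.add i2
      rw [integral_add i012 hRi, integral_add i01 i2,
        integral_add i0 i1, integral_const_mul, integral_const_mul, hEY, hVY]
      simp
    rw [hsum]
    have e : 1 / γ * (φ' w * γ * a + φ'' w / 2 * (γ ^ 2 * a ^ 2)
          + φ'' w / 2 * (l * γ * w ^ 2) + ∫ ω, R ω ∂P) - (a * φ' w + l / 2 * w ^ 2 * φ'' w)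
        = φ'' w / 2 * a ^ 2 * γ + (∫ ω, R ω ∂P) / γ := by
      field_simp
      ring
    rw [e]
    refine (abs_add_le _ _).trans (add_le_add ?_ ?_)
    · rw [abs_mul _ γ, abs_of_pos hγ]
    · rw [abs_div, abs_of_pos hγ, div_le_iff₀ hγ]
      linarith
  rw [tendsto_iff_norm_sub_tendsto_zero]
  have hlim : Filter.Tendsto (fun γ : ℝ => |φ'' w / 2 * a ^ 2| * γ + D * Real.sqrt γ ^ δ)
      (nhdsWithin 0 (Set.Ioi 0)) (nhds 0) := by
    have hc : Continuous (fun γ : ℝ => |φ'' w / 2 * a ^ 2| * γ + D * Real.sqrt γ ^ δ) := by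
      have := Real.continuous_sqrt.rpow_const (p := δ) (fun _ => Or.inr hδ0.le)
      fun_prop
    have := hc.tendsto 0
    simp only [mul_zero, Real.sqrt_zero, Real.zero_rpow hδ0.ne', add_zero] at this
    exact this.mono_left nhdsWithin_le_nhds
  refine squeeze_zero' (Filter.Eventually.of_forall fun _ => norm_nonneg _) ?_ hlim
  filter_upwards [Ioc_mem_nhdsGT (zero_lt_one (α := ℝ))] with γ hγ
  exact key γ hγ
end

section
/- Let λ > 0 and set μ = 1 + 2/λ. The function g_∞(w) = ((μ-1)^μ/Γ(μ)) · exp(-(μ-1)/w) / w^{1+μ}, defined for w > 0, satisfies the zero-flux identity (λ/2) · d/dw ( w² g_∞(w) ) + (w - 1) g_∞(w) = 0 for every w > 0; consequently g_∞ is a stationary solution of the Fokker-Planck equation ∂g/∂τ = (λ/2) ∂²(w² g)/∂w² + ∂((w - 1) g)/∂w. -/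
/-- The inverse-Gamma density `g_∞(w) = ((μ-1)^μ/Γ(μ)) e^{-(μ-1)/w} w^{-(1+μ)}`
with `μ = 1 + 2/λ` satisfies the zero-flux identity
`(λ/2) d/dw(w² g_∞(w)) + (w - 1) g_∞(w) = 0` for every `w > 0`; consequently it is
a stationary solution of the Fokker-Planck equation
`∂g/∂τ = (λ/2)∂²(w²g)/∂w² + ∂((w-1)g)/∂w`. -/
theorem inverse_gamma_zero_flux (l μ : ℝ) (hl : 0 < l) (hμ : μ = 1 + 2 / l)
    (g : ℝ → ℝ)
    (hg : ∀ w : ℝ, 0 < w →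
      g w = (μ - 1) ^ μ / Real.Gamma μ * Real.exp (-(μ - 1) / w) / w ^ (1 + μ)) :
    (∀ w : ℝ, 0 < w →
      l / 2 * deriv (fun v : ℝ => v ^ 2 * g v) w + (w - 1) * g w = 0) ∧
    (∀ w : ℝ, 0 < w →
      deriv (fun v : ℝ =>
        l / 2 * deriv (fun u : ℝ => u ^ 2 * g u) v + (v - 1) * g v) w = 0) := by
  have key : ∀ w : ℝ, 0 < w →
      l / 2 * deriv (fun v : ℝ => v ^ 2 * g v) w + (w - 1) * g w = 0 := by
    intro w hw
    have hP : 0 < w ^ (1 + μ) := Real.rpow_pos_of_pos hw _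
    have h1 : HasDerivAt (fun v : ℝ => v ^ (1 + μ)) ((1 + μ) * (w ^ (1 + μ) / w)) w := by
      have h := Real.hasDerivAt_rpow_const (x := w) (p := 1 + μ) (Or.inl hw.ne')
      rwa [Real.rpow_sub_one hw.ne'] at h
    have h2 : HasDerivAt (fun v : ℝ => Real.exp (-(μ - 1) / v))
        (Real.exp (-(μ - 1) / w) * ((μ - 1) / w ^ 2)) w := by
      have h := ((hasDerivAt_const w (-(μ - 1))).fun_div (hasDerivAt_id' w) hw.ne').exp
      convert h using 1
      ring
    have h3 : HasDerivAt (fun v : ℝ => v ^ 2) (2 * w) w := by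
      simpa using hasDerivAt_pow 2 w
    have h4 := h3.fun_mul ((h2.const_mul ((μ - 1) ^ μ / Real.Gamma μ)).fun_div h1 hP.ne')
    have he : (fun v : ℝ => v ^ 2 * g v) =ᶠ[nhds w] fun v : ℝ =>
        v ^ 2 * ((μ - 1) ^ μ / Real.Gamma μ * Real.exp (-(μ - 1) / v) / v ^ (1 + μ)) := by
      filter_upwards [lt_mem_nhds hw] with v hv
      rw [hg v hv]
    rw [he.deriv_eq, h4.deriv, hg w hw]
    generalize (μ - 1) ^ μ / Real.Gamma μ = C
    generalize Real.exp (-(μ - 1) / w) = E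
    generalize w ^ (1 + μ) = P at *
    have hP' := hP.ne'
    have hw' := hw.ne'
    have hl' := hl.ne'
    subst hμ
    field_simp
    ring
  refine ⟨key, fun w hw => ?_⟩
  have he : (fun v : ℝ =>
      l / 2 * deriv (fun u : ℝ => u ^ 2 * g u) v + (v - 1) * g v) =ᶠ[nhds w]
      fun _ => (0 : ℝ) := by
    filter_upwards [lt_mem_nhds hw] with v hv
    exact key v hv
  rw [he.deriv_eq]
  simp
end

section
/- For every μ > 1, the complementary cumulative distribution of the stationary density satisfies the weak Pareto law with exponent μ: lim_{w → ∞} w^μ ∫_w^∞ g_∞(s) ds = (μ-1)^μ/(μ Γ(μ)). That is, the fraction of agents with wealth exceeding w decays like w^{-μ} for large w. -/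
/-- Weak Pareto law for the stationary distribution: for every `μ > 1`,
`lim_{w→∞} w^μ ∫_w^∞ g_∞(s) ds = (μ-1)^μ/(μ Γ(μ))`; the fraction of agents with
wealth exceeding `w` decays like `w^{-μ}`. -/
theorem inverse_gamma_weak_pareto_law (μ : ℝ) (hμ : 1 < μ) :
    Filter.Tendsto
      (fun w : ℝ =>
        w ^ μ * ∫ s in Set.Ioi w,
          (μ - 1) ^ μ / Real.Gamma μ * Real.exp (-(μ - 1) / s) / s ^ (1 + μ))
      Filter.atTop (nhds ((μ - 1) ^ μ / (μ * Real.Gamma μ))) := by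
  have hG : 0 < Real.Gamma μ := Real.Gamma_pos_of_pos (by linarith)
  have hP : 0 < (μ - 1) ^ μ := Real.rpow_pos_of_pos (by linarith) _
  obtain ⟨C, hC⟩ : ∃ C, C = (μ - 1) ^ μ / Real.Gamma μ := ⟨_, rfl⟩
  have hC0 : 0 < C := by rw [hC]; positivity
  have hlim : (μ - 1) ^ μ / (μ * Real.Gamma μ) = C / μ := by
    rw [hC]; field_simp
  rw [hlim, ← hC]
  have hint : ∀ w : ℝ, 0 < w → MeasureTheory.IntegrableOn (fun s : ℝ => s ^ (-(1 + μ)))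
      (Set.Ioi w) := fun w hw => integrableOn_Ioi_rpow_of_lt (by linarith) hw
  have hval : ∀ w : ℝ, 0 < w → ∀ K : ℝ,
      w ^ μ * ∫ s in Set.Ioi w, K * s ^ (-(1 + μ)) = K / μ := by
    intro w hw K
    rw [MeasureTheory.integral_const_mul, integral_Ioi_rpow_of_lt (by linarith) hw]
    have e : -(1 + μ) + 1 = -μ := by ring
    have hwp : 0 < w ^ μ := Real.rpow_pos_of_pos hw _
    rw [e, Real.rpow_neg hw.le]
    field_simp
  have hle : ∀ w : ℝ, 0 < w → ∀ s ∈ Set.Ioi w,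
      C * Real.exp (-(μ - 1) / s) / s ^ (1 + μ) ≤ C * s ^ (-(1 + μ)) := by
    intro w hw s hs
    have hs0 : 0 < s := hw.trans hs
    rw [Real.rpow_neg hs0.le, div_eq_mul_inv]
    have : Real.exp (-(μ - 1) / s) ≤ 1 := by
      rw [Real.exp_le_one_iff]
      exact div_nonpos_of_nonpos_of_nonneg (by linarith) hs0.le
    have h2 : 0 < (s ^ (1 + μ))⁻¹ := inv_pos.2 (Real.rpow_pos_of_pos hs0 _)
    exact mul_le_mul_of_nonneg_right (by nlinarith) h2.le
  have hge : ∀ w : ℝ, 0 < w → ∀ s ∈ Set.Ioi w,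
      C * Real.exp (-(μ - 1) / w) * s ^ (-(1 + μ)) ≤
        C * Real.exp (-(μ - 1) / s) / s ^ (1 + μ) := by
    intro w hw s hs
    have hs0 : 0 < s := hw.trans hs
    have h2 : 0 < (s ^ (1 + μ))⁻¹ := inv_pos.2 (Real.rpow_pos_of_pos hs0 _)
    rw [Real.rpow_neg hs0.le, div_eq_mul_inv]
    have h3 : -(μ - 1) / w ≤ -(μ - 1) / s := by
      rw [neg_div, neg_div]
      exact neg_le_neg (div_le_div_of_nonneg_left (by linarith) hw (le_of_lt hs))
    exact mul_le_mul_of_nonneg_right (mul_le_mul_of_nonneg_left (Real.exp_le_exp.2 h3) hC0.le) h2.le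
  have hint2 : ∀ w : ℝ, 0 < w → MeasureTheory.IntegrableOn
      (fun s : ℝ => C * Real.exp (-(μ - 1) / s) / s ^ (1 + μ)) (Set.Ioi w) := by
    intro w hw
    refine MeasureTheory.Integrable.mono' ((hint w hw).const_mul C) ?_ ?_
    · exact Measurable.aestronglyMeasurable (by fun_prop)
    · refine (MeasureTheory.ae_restrict_iff' measurableSet_Ioi).2 (Filter.Eventually.of_forall ?_)
      intro s hs
      have hs0 : 0 < s := hw.trans hs
      have h2 : 0 < s ^ (1 + μ) := Real.rpow_pos_of_pos hs0 _
      rw [Real.norm_of_nonneg (by positivity)]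
      exact hle w hw s hs
  have hlow : Filter.Tendsto (fun w : ℝ => C * Real.exp (-(μ - 1) / w) / μ)
      Filter.atTop (nhds (C / μ)) := by
    have h1 : Filter.Tendsto (fun w : ℝ => -(μ - 1) / w) Filter.atTop (nhds 0) :=
      Filter.Tendsto.const_div_atTop Filter.tendsto_id _
    have h2 := (Real.continuous_exp.tendsto 0).comp h1
    have h3 := (h2.const_mul C).div_const μ
    simpa using h3
  refine tendsto_of_tendsto_of_tendsto_of_le_of_le' hlow tendsto_const_nhds ?_ ?_
  · filter_upwards [Filter.eventually_gt_atTop 0] with w hw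
    rw [← hval w hw]
    have hwp : 0 < w ^ μ := Real.rpow_pos_of_pos hw _
    exact mul_le_mul_of_nonneg_left (MeasureTheory.setIntegral_mono_on
      ((hint w hw).const_mul _) (hint2 w hw) measurableSet_Ioi (hge w hw)) hwp.le
  · filter_upwards [Filter.eventually_gt_atTop 0] with w hw
    rw [← hval w hw]
    have hwp : 0 < w ^ μ := Real.rpow_pos_of_pos hw _
    exact mul_le_mul_of_nonneg_left (MeasureTheory.setIntegral_mono_on
      (hint2 w hw) ((hint w hw).const_mul _) measurableSet_Ioi (hle w hw)) hwp.le
end
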